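/- arXiv:1509.08263 — 3 statements merged into one kernel-verified Lean document; each statement's English description precedes it below -/
import Mathlib

section
/- Let x be an n×n complex hermitian positive semidefinite matrix of rank 1 and let π be an n×n complex hermitian matrix lying in the image of L_x, i.e. π = x∘w for some hermitian matrix w. Then tr(x·π·π) = ((tr x)/2)·(tr(π·π) + (tr π)²). -/
open Matrix
open scoped ComplexOrder

/-- The Jordan product of two matrices. -/
noncomputable def jordanProd {n : ℕ} (a b : Matrix (Fin n) (Fin n) ℂ) :
    Matrix (Fin n) (Fin n) ℂ :=
  (1 / 2 : ℂ) • (a * b + b * a)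

/-!
A matrix `x` of rank at most one satisfies `x * m * x = tr (x * m) • x` for every `m`. Hence
`q = x * w + w * x` solves `x * q + q * x = tr x • q + tr q • x` and `tr (x * q) = tr x * tr q`.
Multiplying the first identity by `q` and taking traces gives the claim for `q`; both sides of the
claim scale quadratically, so it passes to `q / 2`.
-/

theorem exists_eq_vecMulVec_of_rank_le_one {K m n : Type*} [Field K] [Fintype n]
    {x : Matrix m n K} (hx : x.rank ≤ 1) : ∃ u v, x = vecMulVec u v := by
  have := Module.Finite.span_of_finite K (Set.finite_range x.col)
  rw [rank_eq_finrank_span_cols, Submodule.finrank_le_one_iff_isPrincipal] at hx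
  obtain ⟨u, hu⟩ := hx.principal
  have col_mem_span (j : n) : x.col j ∈ Submodule.span K {u} :=
    hu ▸ Submodule.subset_span (Set.mem_range_self j)
  choose v hv using fun j ↦ Submodule.mem_span_singleton.mp (col_mem_span j)
  refine ⟨u, v, Matrix.ext fun i j ↦ ?_⟩
  calc x i j = v j * u i := (congrFun (hv j) i).symm
    _ = vecMulVec u v i j := mul_comm _ _

section CommSemiring

variable {R ι : Type*} [CommSemiring R] [Fintype ι]

theorem vecMulVec_mul_mul_vecMulVec_self (u v : ι → R) (m : Matrix ι ι R) :
    vecMulVec u v * m * vecMulVec u v = (vecMulVec u v * m).trace • vecMulVec u v := by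
  rw [vecMulVec_mul, vecMulVec_mul_vecMulVec, trace_vecMulVec, dotProduct_comm, vecMulVec_smul]

theorem mul_self_of_mul_mul_self_eq_trace_smul {x : Matrix ι ι R}
    (hx : ∀ m, x * m * x = (x * m).trace • x) : x * x = x.trace • x := by
  classical simpa only [mul_one] using hx 1

theorem trace_anticommutator (x w : Matrix ι ι R) :
    (x * w + w * x).trace = 2 * (x * w).trace := by
  rw [trace_add, trace_mul_comm w x, two_mul]

theorem trace_mul_anticommutator {x : Matrix ι ι R}
    (hx : ∀ m, x * m * x = (x * m).trace • x) (w : Matrix ι ι R) :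
    (x * (x * w + w * x)).trace = x.trace * (x * w + w * x).trace := by
  rw [trace_anticommutator, mul_add, ← mul_assoc, ← mul_assoc, hx,
    mul_self_of_mul_mul_self_eq_trace_smul hx, trace_add, smul_mul_assoc, trace_smul,
    trace_smul, smul_eq_mul, smul_eq_mul]
  ring

theorem mul_anticommutator_add_anticommutator_mul {x : Matrix ι ι R}
    (hx : ∀ m, x * m * x = (x * m).trace • x) (w : Matrix ι ι R) :
    x * (x * w + w * x) + (x * w + w * x) * x =
      x.trace • (x * w + w * x) + (x * w + w * x).trace • x := by
  calc x * (x * w + w * x) + (x * w + w * x) * x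
      = x * x * w + w * (x * x) + 2 • (x * w * x) := by noncomm_ring
    _ = x.trace • (x * w + w * x) + (2 * (x * w).trace) • x := by
      rw [hx, mul_self_of_mul_mul_self_eq_trace_smul hx, smul_mul_assoc, mul_smul_comm, smul_add,
        two_smul ℕ, two_mul, add_smul]
    _ = x.trace • (x * w + w * x) + (x * w + w * x).trace • x := by rw [trace_anticommutator]

theorem two_mul_trace_mul_anticommutator_mul_self {x : Matrix ι ι R}
    (hx : ∀ m, x * m * x = (x * m).trace • x) (w : Matrix ι ι R) :
    2 * (x * (x * w + w * x) * (x * w + w * x)).trace =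
      x.trace * (((x * w + w * x) * (x * w + w * x)).trace + (x * w + w * x).trace ^ 2) := by
  have trace_x_q := trace_mul_anticommutator hx w
  have x_q_add_q_x := mul_anticommutator_add_anticommutator_mul hx w
  set q := x * w + w * x
  calc 2 * (x * q * q).trace = ((x * q + q * x) * q).trace := by
        rw [add_mul, trace_add, mul_assoc q x q, trace_mul_comm q (x * q), two_mul]
    _ = x.trace * (q * q).trace + q.trace * (x * q).trace := by
        rw [x_q_add_q_x, add_mul, trace_add, smul_mul_assoc, smul_mul_assoc, trace_smul,
          trace_smul, smul_eq_mul, smul_eq_mul]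
    _ = x.trace * ((q * q).trace + q.trace ^ 2) := by rw [trace_x_q]; ring

end CommSemiring

theorem rank_one_psd_trace_x_pi_sq_general {K ι : Type*} [Field K] [NeZero (2 : K)] [Fintype ι]
    {x p : Matrix ι ι K} (hrank : x.rank ≤ 1)
    (hp : ∃ w, p = (1 / 2 : K) • (x * w + w * x)) :
    (x * p * p).trace = (x.trace / 2) * ((p * p).trace + p.trace ^ 2) := by
  obtain ⟨w, rfl⟩ := hp
  obtain ⟨u, v, hx⟩ := exists_eq_vecMulVec_of_rank_le_one hrank
  have anticommutator_identity :=
    two_mul_trace_mul_anticommutator_mul_self (hx ▸ vecMulVec_mul_mul_vecMulVec_self u v) w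
  simp only [mul_smul_comm, smul_mul_assoc, trace_smul, smul_eq_mul]
  field_simp
  linear_combination anticommutator_identity

theorem rank_one_psd_trace_x_pi_sq
    (n : ℕ) (hn : 2 ≤ n) (x p : Matrix (Fin n) (Fin n) ℂ)
    (hherm : x.IsHermitian) (hpsd : x.PosSemidef) (hrank : x.rank = 1)
    (hp : ∃ w : Matrix (Fin n) (Fin n) ℂ, w.IsHermitian ∧ p = jordanProd x w) :
    (x * p * p).trace = (x.trace / 2) * ((p * p).trace + p.trace ^ 2) := by
  obtain ⟨w, -, hw⟩ := hp
  exact rank_one_psd_trace_x_pi_sq_general hrank.le ⟨w, hw⟩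
end

section
/- Primary quadratic relation (Theorem 6.1(i)): with the notation of the context, (2/n)·Σ_α 𝓛_{e_α}² − 𝓛_e² − 𝒳_e·𝒴_e = −μ². -/
open Matrix
open scoped ComplexOrder

/-- The Jordan triple product `{uvw} = u∘(v∘w) − v∘(u∘w) + (u∘v)∘w`. -/
noncomputable def jTriple {n : ℕ} (u v w : Matrix (Fin n) (Fin n) ℂ) :
    Matrix (Fin n) (Fin n) ℂ :=
  jordanProd u (jordanProd v w) - jordanProd v (jordanProd u w)
    + jordanProd (jordanProd u v) w

/-- The real inner product `⟨u|v⟩ = (1/n)·Re(tr(u·v))`. -/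
noncomputable def jInner {n : ℕ} (u v : Matrix (Fin n) (Fin n) ℂ) : ℝ :=
  (1 / n : ℝ) * ((u * v).trace).re

/-- `𝒴_u = ⟨u|x⟩`. -/
noncomputable def Yfun {n : ℕ} (x u : Matrix (Fin n) (Fin n) ℂ) : ℝ :=
  jInner u x

/-- `𝓛_u = ⟨u∘x|π⟩`. -/
noncomputable def Lfun {n : ℕ} (x p u : Matrix (Fin n) (Fin n) ℂ) : ℝ :=
  jInner (jordanProd u x) p

/-- `𝓛_{u,v} = ⟨u∘(v∘x) − v∘(u∘x)|π⟩ − μ·i·tr(x·[u,v])/(2·tr x)`. -/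
noncomputable def LLfun {n : ℕ} (μ : ℝ) (x p u v : Matrix (Fin n) (Fin n) ℂ) : ℝ :=
  jInner (jordanProd u (jordanProd v x) - jordanProd v (jordanProd u x)) p
    - μ * (Complex.I * (x * (u * v - v * u)).trace).re / (2 * (x.trace).re)

/-- `𝒳_u = ⟨x|{πuπ}⟩ + n·μ²·Re(tr(x·u))/(tr x)² − μ·i·tr(x·[u,π])/(tr x)`. -/
noncomputable def Xfun {n : ℕ} (μ : ℝ) (x p u : Matrix (Fin n) (Fin n) ℂ) : ℝ :=
  jInner x (jTriple p u p) + (n : ℝ) * μ ^ 2 * ((x * u).trace).re / ((x.trace).re) ^ 2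
    - μ * (Complex.I * (x * (u * p - p * u)).trace).re / (x.trace).re

/-!
A matrix `x` of rank at most one satisfies `x p x = tr(x p) x`, so that `tr(x b x c)` factors as
`tr(x b) tr(x c)`. Expanding the square of `x∘p`, this yields
`(2/n)⟨x∘p|x∘p⟩ = ⟨x|p⟩² + ⟨e|x⟩⟨x|p²⟩`. The left-hand side is `(2/n) ∑ 𝓛_{e_α}²`, by associativity
of the inner product and Parseval's identity. On the right `⟨x|p⟩ = 𝓛_e` and `⟨e|x⟩ = 𝒴_e`, while
`𝒳_e = ⟨x|p²⟩ + μ²/𝒴_e`, and the last term accounts for `−μ²`.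
-/

section RankOne

variable {ι κ K : Type*} [Fintype κ] [Field K]

theorem exists_eq_vecMulVec_of_rank_le_one_s10 {A : Matrix ι κ K} (hA : A.rank ≤ 1) :
    ∃ (a : ι → K) (b : κ → K), A = vecMulVec a b := by
  classical
  obtain ⟨a, ha⟩ := finrank_le_one_iff.mp hA
  choose b hb using fun j ↦ ha ⟨A *ᵥ Pi.single j 1, LinearMap.mem_range_self A.mulVecLin _⟩
  refine ⟨a, b, ?_⟩
  ext i j
  have hij : b j * a.1 i = A i j := by
    simpa using congrFun (congrArg Subtype.val (hb j)) i
  rw [vecMulVec_apply, ← hij, mul_comm]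

variable [Fintype ι]

theorem mul_mul_self_of_rank_le_one {A : Matrix ι κ K} (hA : A.rank ≤ 1) (B : Matrix κ ι K) :
    A * B * A = (A * B).trace • A := by
  obtain ⟨a, b, rfl⟩ := exists_eq_vecMulVec_of_rank_le_one_s10 hA
  rw [vecMulVec_mul, vecMulVec_mul_vecMulVec, trace_vecMulVec, dotProduct_comm, vecMulVec_smul]

theorem trace_mul_mul_mul_of_rank_le_one {A : Matrix ι κ K} (hA : A.rank ≤ 1)
    (B C : Matrix κ ι K) :
    (A * B * A * C).trace = (A * B).trace * (A * C).trace := by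
  rw [mul_mul_self_of_rank_le_one hA, Matrix.smul_mul, trace_smul, smul_eq_mul]

theorem trace_ne_zero_of_isHermitian_of_rank_eq_one [PartialOrder K] [StarRing K]
    [StarOrderedRing K] {A : Matrix ι ι K} (hA : A.IsHermitian) (hrank : A.rank = 1) :
    A.trace ≠ 0 := by
  classical
  intro htrace
  have hsq : Aᴴ * A = 0 := by
    simpa [hA.eq, htrace] using mul_mul_self_of_rank_le_one hrank.le 1
  simp [conjTranspose_mul_self_eq_zero.mp hsq] at hrank

end RankOne

theorem isSelfAdjoint_trace_mul {ι R : Type*} [Fintype ι] [CommSemiring R] [StarRing R]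
    {A B : Matrix ι ι R} (hA : A.IsHermitian) (hB : B.IsHermitian) :
    IsSelfAdjoint (A * B).trace := by
  rw [IsSelfAdjoint, ← trace_conjTranspose, conjTranspose_mul, hA.eq, hB.eq, trace_mul_comm]

section Jordan

variable {n : ℕ} {x p u v : Matrix (Fin n) (Fin n) ℂ}

theorem jordanProd_comm (u v : Matrix (Fin n) (Fin n) ℂ) : jordanProd u v = jordanProd v u := by
  rw [jordanProd, jordanProd, add_comm]

theorem jordanProd_self (u : Matrix (Fin n) (Fin n) ℂ) : jordanProd u u = u * u := by
  rw [jordanProd, ← two_smul ℂ, smul_smul, one_div, inv_mul_cancel₀ two_ne_zero, one_smul]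

theorem one_jordanProd (u : Matrix (Fin n) (Fin n) ℂ) : jordanProd 1 u = u := by
  rw [jordanProd, one_mul, mul_one, ← two_smul ℂ, smul_smul, one_div,
    inv_mul_cancel₀ two_ne_zero, one_smul]

theorem isHermitian_jordanProd (hu : u.IsHermitian) (hv : v.IsHermitian) :
    (jordanProd u v).IsHermitian := by
  simp [IsHermitian, jordanProd, hu.eq, hv.eq, add_comm]

theorem jTriple_one_middle (u v : Matrix (Fin n) (Fin n) ℂ) : jTriple u 1 v = jordanProd u v := by
  rw [jTriple, jordanProd_comm u 1, one_jordanProd, one_jordanProd, one_jordanProd, sub_self,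
    zero_add]

theorem jInner_jordanProd_left (u v w : Matrix (Fin n) (Fin n) ℂ) :
    jInner (jordanProd u v) w = jInner u (jordanProd v w) := by
  have hcycle : (v * (u * w)).trace = (u * (w * v)).trace := by
    rw [trace_mul_comm, Matrix.mul_assoc]
  simp only [jInner, jordanProd, smul_mul_assoc, mul_smul_comm, trace_smul, add_mul, mul_add,
    trace_add, Matrix.mul_assoc, hcycle]

theorem jInner_sum_smul_left {ι : Type*} [Fintype ι] (c : ι → ℝ)
    (E : ι → Matrix (Fin n) (Fin n) ℂ) (u : Matrix (Fin n) (Fin n) ℂ) :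
    jInner (∑ α, (c α : ℂ) • E α) u = ∑ α, c α * jInner (E α) u := by
  simp only [jInner, Finset.sum_mul, smul_mul_assoc, trace_sum, trace_smul, smul_eq_mul,
    Complex.re_sum, Complex.re_ofReal_mul, Finset.mul_sum, mul_left_comm]

theorem sum_jInner_sq_of_eq_sum {ι : Type*} [Fintype ι] {E : ι → Matrix (Fin n) (Fin n) ℂ}
    (hu : u = ∑ α, (jInner (E α) u : ℂ) • E α) :
    ∑ α, jInner (E α) u ^ 2 = jInner u u := by
  calc ∑ α, jInner (E α) u ^ 2
      = jInner (∑ α, (jInner (E α) u : ℂ) • E α) u := by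
        simp only [jInner_sum_smul_left, sq]
    _ = jInner u u := by rw [← hu]

theorem ofReal_jInner (hu : u.IsHermitian) (hv : v.IsHermitian) :
    (jInner u v : ℂ) = (u * v).trace / n := by
  have hreal : ((u * v).trace.re : ℂ) = (u * v).trace :=
    Complex.conj_eq_iff_re.mp (isSelfAdjoint_trace_mul hu hv)
  rw [jInner, Complex.ofReal_mul, hreal]
  push_cast
  ring

theorem trace_jordanProd_mul_self (u v : Matrix (Fin n) (Fin n) ℂ) :
    (jordanProd u v * jordanProd u v).trace
      = ((u * v * u * v).trace + (u * u * (v * v)).trace) / 2 := by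
  have hvuvu : (v * (u * (v * u))).trace = (u * (v * (u * v))).trace := by
    simpa only [Matrix.mul_assoc] using trace_mul_comm v (u * v * u)
  have huvvu : (u * (v * (v * u))).trace = (u * (u * (v * v))).trace := by
    simpa only [Matrix.mul_assoc] using trace_mul_comm (u * v * v) u
  have hvuuv : (v * (u * (u * v))).trace = (u * (u * (v * v))).trace := by
    simpa only [Matrix.mul_assoc] using trace_mul_comm v (u * u * v)
  simp only [jordanProd, smul_mul_assoc, mul_smul_comm, trace_smul, add_mul, mul_add, trace_add,
    smul_eq_mul, Matrix.mul_assoc, hvuvu, huvvu, hvuuv]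
  ring

theorem two_div_mul_jInner_jordanProd_self (hx : x.IsHermitian) (hrank : x.rank ≤ 1)
    (hp : p.IsHermitian) :
    2 / (n : ℝ) * jInner (jordanProd x p) (jordanProd x p)
      = jInner x p ^ 2 + jInner 1 x * jInner x (p * p) := by
  have hxp := isHermitian_jordanProd hx hp
  have hpp : (p * p).IsHermitian := jordanProd_self p ▸ isHermitian_jordanProd hp hp
  have hxpxp : (x * p * x * p).trace = (x * p).trace ^ 2 := by
    rw [trace_mul_mul_mul_of_rank_le_one hrank, sq]
  have hxxpp : (x * x * (p * p)).trace = x.trace * (x * (p * p)).trace := by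
    simpa only [mul_one] using trace_mul_mul_mul_of_rank_le_one hrank 1 (p * p)
  apply Complex.ofReal_injective
  push_cast
  rw [ofReal_jInner hxp hxp, ofReal_jInner hx hp, ofReal_jInner isHermitian_one hx,
    ofReal_jInner hx hpp, trace_jordanProd_mul_self, hxpxp, hxxpp, one_mul]
  ring

theorem Lfun_eq_jInner_jordanProd (x p u : Matrix (Fin n) (Fin n) ℂ) :
    Lfun x p u = jInner u (jordanProd x p) :=
  jInner_jordanProd_left u x p

theorem Lfun_one (x p : Matrix (Fin n) (Fin n) ℂ) : Lfun x p 1 = jInner x p := by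
  rw [Lfun, one_jordanProd]

theorem Xfun_one (μ : ℝ) (x p : Matrix (Fin n) (Fin n) ℂ) :
    Xfun μ x p 1 = jInner x (p * p) + μ ^ 2 / Yfun x 1 := by
  have hcomm : (1 : Matrix (Fin n) (Fin n) ℂ) * p - p * 1 = 0 := by rw [one_mul, mul_one, sub_self]
  rw [Xfun, jTriple_one_middle, jordanProd_self, hcomm, Yfun, jInner, jInner]
  simp only [mul_one, one_mul, mul_zero, trace_zero, Complex.zero_re, zero_div, sub_zero]
  field_simp

theorem Yfun_one_ne_zero (hx : x.IsHermitian) (hrank : x.rank = 1) : Yfun x 1 ≠ 0 := by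
  have hn : (n : ℂ) ≠ 0 := by
    intro h
    obtain rfl : n = 0 := Nat.cast_eq_zero.mp h
    simpa [hrank] using x.rank_le_width
  rw [← Complex.ofReal_ne_zero, Yfun, ofReal_jInner isHermitian_one hx, one_mul]
  exact div_ne_zero (trace_ne_zero_of_isHermitian_of_rank_eq_one hx hrank) hn

end Jordan

theorem primary_quadratic_relation_general {n : ℕ} {ι : Type*} [Fintype ι] (μ : ℝ)
    {x p : Matrix (Fin n) (Fin n) ℂ} (hx : x.IsHermitian) (hrank : x.rank = 1)
    (hp : p.IsHermitian) {E : ι → Matrix (Fin n) (Fin n) ℂ}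
    (hE : ∀ u : Matrix (Fin n) (Fin n) ℂ, u.IsHermitian →
      u = ∑ α, (jInner (E α) u : ℂ) • E α) :
    2 / (n : ℝ) * ∑ α, Lfun x p (E α) ^ 2 - Lfun x p 1 ^ 2 - Xfun μ x p 1 * Yfun x 1
      = -μ ^ 2 := by
  have hparseval : ∑ α, Lfun x p (E α) ^ 2 = jInner (jordanProd x p) (jordanProd x p) := by
    simp only [Lfun_eq_jInner_jordanProd]
    exact sum_jInner_sq_of_eq_sum (hE _ (isHermitian_jordanProd hx hp))
  have hX : Xfun μ x p 1 * Yfun x 1 = jInner x (p * p) * Yfun x 1 + μ ^ 2 := by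
    rw [Xfun_one, add_mul, div_mul_cancel₀ _ (Yfun_one_ne_zero hx hrank)]
  rw [hparseval, two_div_mul_jInner_jordanProd_self hx hrank.le hp, Lfun_one, hX, Yfun]
  ring

theorem primary_quadratic_relation
    (n : ℕ) (hn : 2 ≤ n) (μ : ℝ)
    (x : Matrix (Fin n) (Fin n) ℂ)
    (hherm : x.IsHermitian) (hpsd : x.PosSemidef) (hrank : x.rank = 1)
    (p w : Matrix (Fin n) (Fin n) ℂ) (hw : w.IsHermitian) (hp : p = jordanProd x w)
    (E : Fin (n ^ 2) → Matrix (Fin n) (Fin n) ℂ)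
    (hEherm : ∀ α, (E α).IsHermitian)
    (hEorth : ∀ α β, jInner (E α) (E β) = if α = β then 1 else 0)
    (hEspan : ∀ u : Matrix (Fin n) (Fin n) ℂ, u.IsHermitian →
      u = ∑ α, (jInner (E α) u : ℂ) • E α) :
    (2 / (n : ℝ)) * (∑ α, (Lfun x p (E α)) ^ 2)
      - (Lfun x p 1) ^ 2 - Xfun μ x p 1 * Yfun x 1 = -μ ^ 2 := by
  subst hp
  exact primary_quadratic_relation_general μ hherm hrank (isHermitian_jordanProd hherm hw) hEspan
end

section
/- Laplace–Runge–Lenz vector of the Kepler problem (example, Section 3.3): with the notation of the context, for i = 1, 2, 3 let εᵢ = (0, eᵢ) ∈ V (eᵢ the standard basis vectors of ℝ³), and define 𝒳_u = ⟨x | {πuπ}⟩, 𝒴_u = ⟨u | x⟩ for u ∈ V, and A_i = (1/2)·(𝒳_{εᵢ} − 𝒴_{εᵢ}·𝒳_e/𝒴_e) + 𝒴_{εᵢ}/𝒴_e. Then the vector (A₁, A₂, A₃) ∈ ℝ³ equals (q × p) × p + q/|q|, where × is the cross product on ℝ³. -/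
open Matrix

/-- The Jordan product on `V = ℝ × ℝ³` (the Jordan algebra `Γ(3)`). -/
def gammaProd (a b : ℝ × (Fin 3 → ℝ)) : ℝ × (Fin 3 → ℝ) :=
  (a.1 * b.1 + a.2 ⬝ᵥ b.2, a.1 • b.2 + b.1 • a.2)

/-- The inner product on `V = ℝ × ℝ³`, the standard one on `ℝ⁴`. -/
def gammaInner (a b : ℝ × (Fin 3 → ℝ)) : ℝ :=
  a.1 * b.1 + a.2 ⬝ᵥ b.2

/-- The Jordan triple product `{uvw} = u∘(v∘w) − v∘(u∘w) + (u∘v)∘w` on `Γ(3)`. -/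
def gammaTriple (u v w : ℝ × (Fin 3 → ℝ)) : ℝ × (Fin 3 → ℝ) :=
  gammaProd u (gammaProd v w) - gammaProd v (gammaProd u w) + gammaProd (gammaProd u v) w

/-!
In a spin factor the quadratic map has the closed form `{aua} = 2⟨a|u⟩a - det(a) ū`, where
`ū = (u₀, -u⃗)` and `det(a) = a₀² - a⃗·a⃗`. Since `⟨x|π⟩ = p·q` and `det(π) = (p·q)²/r² - p·p`,
the terms quadratic in `p·q` cancel in `⟨x|{πuπ}⟩`, leaving
`2(p·q)(p·u⃗) + (p·p)(r u₀ - q·u⃗)`. On `u = εᵢ` and `u = e` this gives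
`½(X(εᵢ) - Y(εᵢ) X(e) / Y(e)) = (q·p)pᵢ - (p·p)qᵢ`, the expansion of `(q × p) × p`.
-/

/-- The conjugation `ū = (u₀, -u⃗)` of the spin factor `Γ(3)`, the reflection fixing the line
spanned by the identity element. -/
def gammaConj (u : ℝ × (Fin 3 → ℝ)) : ℝ × (Fin 3 → ℝ) :=
  (u.1, -u.2)

/-- The Jordan determinant of `Γ(3)`, i.e. the Lorentzian quadratic form `a₀² - a⃗·a⃗`; the elements
`(|q|, q)` are null vectors for it. -/
def gammaDet (a : ℝ × (Fin 3 → ℝ)) : ℝ :=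
  a.1 ^ 2 - a.2 ⬝ᵥ a.2

/-- The element `π` of `Γ(3)` attached to the momentum `p` at the position `q`. The distance `r`
from the origin is a separate argument, meant to satisfy `r ^ 2 = q ⬝ᵥ q`. -/
noncomputable def keplerMomentum (r : ℝ) (q p : Fin 3 → ℝ) : ℝ × (Fin 3 → ℝ) :=
  ((p ⬝ᵥ q) / (2 * r), p - ((p ⬝ᵥ q) / (2 * r ^ 2)) • q)

theorem gammaTriple_eq_smul_sub_smul (a u : ℝ × (Fin 3 → ℝ)) :
    gammaTriple a u a = (2 * gammaInner a u) • a - gammaDet a • gammaConj u := by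
  ext <;>
    simp only [gammaTriple, gammaProd, gammaInner, gammaDet, gammaConj, Prod.fst_add, Prod.snd_add,
      Prod.fst_sub, Prod.snd_sub, Prod.smul_fst, Prod.smul_snd, Pi.add_apply, Pi.sub_apply,
      Pi.smul_apply, Pi.neg_apply, smul_eq_mul, dotProduct_add, add_dotProduct, dotProduct_smul,
      smul_dotProduct, dotProduct_comm u.2 a.2] <;>
    ring

theorem gammaInner_gammaTriple (w a u : ℝ × (Fin 3 → ℝ)) :
    gammaInner w (gammaTriple a u a) =
      2 * gammaInner a u * gammaInner w a - gammaDet a * gammaInner w (gammaConj u) := by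
  rw [gammaTriple_eq_smul_sub_smul]
  simp only [gammaInner, Prod.fst_sub, Prod.snd_sub, Prod.smul_fst, Prod.smul_snd, smul_eq_mul,
    dotProduct_sub, dotProduct_smul]
  ring

section KeplerMomentum

variable {r : ℝ} {q : Fin 3 → ℝ}

theorem gammaInner_keplerMomentum (hr₀ : r ≠ 0) (hr : r ^ 2 = q ⬝ᵥ q) (p : Fin 3 → ℝ) :
    gammaInner (r, q) (keplerMomentum r q p) = p ⬝ᵥ q := by
  simp only [gammaInner, keplerMomentum, dotProduct_sub, dotProduct_smul, smul_eq_mul, ← hr,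
    dotProduct_comm q p]
  field_simp
  ring

theorem gammaDet_keplerMomentum (hr₀ : r ≠ 0) (hr : r ^ 2 = q ⬝ᵥ q) (p : Fin 3 → ℝ) :
    gammaDet (keplerMomentum r q p) = (p ⬝ᵥ q) ^ 2 / r ^ 2 - p ⬝ᵥ p := by
  simp only [gammaDet, keplerMomentum, dotProduct_sub, sub_dotProduct, dotProduct_smul,
    smul_dotProduct, smul_eq_mul, ← hr, dotProduct_comm q p]
  field_simp
  ring

theorem gammaInner_gammaTriple_keplerMomentum (hr₀ : r ≠ 0) (hr : r ^ 2 = q ⬝ᵥ q) (p : Fin 3 → ℝ)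
    (u : ℝ × (Fin 3 → ℝ)) :
    gammaInner (r, q) (gammaTriple (keplerMomentum r q p) u (keplerMomentum r q p)) =
      2 * (p ⬝ᵥ q) * (p ⬝ᵥ u.2) + (p ⬝ᵥ p) * (r * u.1 - q ⬝ᵥ u.2) := by
  rw [gammaInner_gammaTriple, gammaInner_keplerMomentum hr₀ hr, gammaDet_keplerMomentum hr₀ hr]
  simp only [gammaInner, keplerMomentum, gammaConj, sub_dotProduct, smul_dotProduct, smul_eq_mul,
    dotProduct_neg]
  field_simp
  ring

end KeplerMomentum

theorem kepler_LRL_vector_from_dynamic_symmetry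
    (q p : Fin 3 → ℝ) (hq : q ≠ 0) :
    let r : ℝ := Real.sqrt (q ⬝ᵥ q)
    let x : ℝ × (Fin 3 → ℝ) := (r, q)
    let π : ℝ × (Fin 3 → ℝ) := ((p ⬝ᵥ q) / (2 * r), p - ((p ⬝ᵥ q) / (2 * r ^ 2)) • q)
    let e : ℝ × (Fin 3 → ℝ) := (1, 0)
    let ε : Fin 3 → ℝ × (Fin 3 → ℝ) := fun i => (0, Pi.single i 1)
    let X : (ℝ × (Fin 3 → ℝ)) → ℝ := fun u => gammaInner x (gammaTriple π u π)
    let Y : (ℝ × (Fin 3 → ℝ)) → ℝ := fun u => gammaInner u x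
    let A : Fin 3 → ℝ := fun i =>
      (1 / 2 : ℝ) * (X (ε i) - Y (ε i) * X e / Y e) + Y (ε i) / Y e
    A = (crossProduct (crossProduct q p) p) + r⁻¹ • q := by
  intro r x π e ε X Y A
  have hqq : 0 < q ⬝ᵥ q := dotProduct_self_star_pos_iff.mpr hq
  have hr₀ : r ≠ 0 := (Real.sqrt_pos.mpr hqq).ne'
  have hr : r ^ 2 = q ⬝ᵥ q := Real.sq_sqrt hqq.le
  have hX (u : ℝ × (Fin 3 → ℝ)) :
      X u = 2 * (p ⬝ᵥ q) * (p ⬝ᵥ u.2) + (p ⬝ᵥ p) * (r * u.1 - q ⬝ᵥ u.2) :=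
    gammaInner_gammaTriple_keplerMomentum hr₀ hr p u
  have hXe : X e = (p ⬝ᵥ p) * r := by simp [hX, e]
  have hXε (i : Fin 3) : X (ε i) = 2 * (p ⬝ᵥ q) * p i - (p ⬝ᵥ p) * q i := by
    simp [hX, ε, sub_eq_add_neg]
  have hYe : Y e = r := by simp [Y, e, x, gammaInner]
  have hYε (i : Fin 3) : Y (ε i) = q i := by simp [Y, ε, x, gammaInner]
  ext i
  calc
    A i = (1 / 2) * (2 * (p ⬝ᵥ q) * p i - (p ⬝ᵥ p) * q i - q i * ((p ⬝ᵥ p) * r) / r) + q i / r := by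
      simp only [A, hXe, hXε, hYe, hYε]
    _ = (q ⬝ᵥ p) * p i - (p ⬝ᵥ p) * q i + r⁻¹ * q i := by
      rw [dotProduct_comm q p]
      field_simp
      ring
    _ = (crossProduct (crossProduct q p) p + r⁻¹ • q) i := by
      simp [cross_cross_eq_smul_sub_smul]
end
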